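/- A complete first-order theory T is NIP if and only if for every family (aᵢ, b̄ᵢ : i ∈ ℚ) of tuples in a model of T in which each aᵢ is a single element, and which is L*-indiscernible when indexed by the random ordered bipartite graph G*, the two sequences (aᵢ : i ∈ ℚ) and (b̄ᵢ : i ∈ ℚ) are mutually indiscernible. -/

import Mathlib

open FirstOrder FirstOrder.Language

universe u v

/-- An elementary extension of `M`: a structure together with an elementary embedding of `M`
into it. -/
structure ElemExt (L : FirstOrder.Language.{u, v}) (M : Type (max u v)) [L.Structure M] where
  carrier : Type (max u v)
  [str : L.Structure carrier]
  emb : M ↪ₑ[L] carrier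

attribute [instance] ElemExt.str

/-- A formula `φ(x̄; ȳ)` (without parameters) has the order property with respect to a theory
`T` if in some model of `T` there are sequences `(āᵢ : i < ω)` and `(b̄ⱼ : j < ω)` such that
`φ(āᵢ; b̄ⱼ)` holds iff `i < j`. -/
def FormulaHasOP {L : FirstOrder.Language.{u, v}} (T : L.Theory) {α β : Type*}
    (φ : L.Formula (α ⊕ β)) : Prop :=
  ∃ (N : FirstOrder.Language.Theory.ModelType.{u, v, max u v} T)
    (a : ℕ → α → N) (b : ℕ → β → N),
    ∀ i j : ℕ, φ.Realize (Sum.elim (a i) (b j)) ↔ i < j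

/-- A formula `φ(x̄; ȳ)` (without parameters) has the independence property with respect to a
theory `T` if in some model of `T` there are tuples `(āᵢ : i < ω)` and `(b̄_S : S ⊆ ω)` such
that `φ(āᵢ; b̄_S)` holds iff `i ∈ S`. -/
def FormulaHasIP {L : FirstOrder.Language.{u, v}} (T : L.Theory) {α β : Type*}
    (φ : L.Formula (α ⊕ β)) : Prop :=
  ∃ (N : FirstOrder.Language.Theory.ModelType.{u, v, max u v} T)
    (a : ℕ → α → N) (b : Set ℕ → β → N),
    ∀ (i : ℕ) (S : Set ℕ), φ.Realize (Sum.elim (a i) (b S)) ↔ i ∈ S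

/-- A formula `φ(x̄; ȳ)` with parameters `c` from `M` has the order property if in some
elementary extension of `M` there are sequences `(āᵢ : i < ω)` and `(b̄ⱼ : j < ω)` such that
`φ(āᵢ; b̄ⱼ; c)` holds iff `i < j`. -/
def HasOPWithParams {L : FirstOrder.Language.{u, v}} {M : Type (max u v)} [L.Structure M]
    {α β γ : Type*} (φ : L.Formula ((α ⊕ β) ⊕ γ)) (c : γ → M) : Prop :=
  ∃ (N : ElemExt L M) (a : ℕ → α → N.carrier) (b : ℕ → β → N.carrier),
    ∀ i j : ℕ, φ.Realize (Sum.elim (Sum.elim (a i) (b j)) (N.emb ∘ c)) ↔ i < j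

/-- A formula `φ(x̄; ȳ)` with parameters `c` from `M` has the independence property if in some
elementary extension of `M` there are tuples `(āᵢ : i < ω)` and `(b̄_S : S ⊆ ω)` such that
`φ(āᵢ; b̄_S; c)` holds iff `i ∈ S`. -/
def HasIPWithParams {L : FirstOrder.Language.{u, v}} {M : Type (max u v)} [L.Structure M]
    {α β γ : Type*} (φ : L.Formula ((α ⊕ β) ⊕ γ)) (c : γ → M) : Prop :=
  ∃ (N : ElemExt L M) (a : ℕ → α → N.carrier) (b : Set ℕ → β → N.carrier),
    ∀ (i : ℕ) (S : Set ℕ), φ.Realize (Sum.elim (Sum.elim (a i) (b S)) (N.emb ∘ c)) ↔ i ∈ S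

/-- The family of tuples `(c̄ᵢ : i ∈ ι)` is an indiscernible sequence over the set `A`:
any two strictly increasing tuples of indices realize the same formulas with parameters
from `A`. -/
def IsIndiscernibleOver {L : FirstOrder.Language.{u, v}} {M : Type (max u v)} [L.Structure M]
    {ι : Type*} [LinearOrder ι] {γ : Type*} (c : ι → γ → M) (A : Set M) : Prop :=
  ∀ (n m : ℕ) (i j : Fin n → ι), StrictMono i → StrictMono j →
    ∀ p : Fin m → M, (∀ l, p l ∈ A) →
      ∀ φ : L.Formula (Fin n × γ ⊕ Fin m),
        φ.Realize (Sum.elim (fun v : Fin n × γ => c (i v.1) v.2) p) ↔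
          φ.Realize (Sum.elim (fun v : Fin n × γ => c (j v.1) v.2) p)

/-- The family of tuples `(c̄ᵢ : i ∈ ι)` is an indiscernible sequence. -/
def IsIndiscernible {L : FirstOrder.Language.{u, v}} {M : Type (max u v)} [L.Structure M]
    {ι : Type*} [LinearOrder ι] {γ : Type*} (c : ι → γ → M) : Prop :=
  IsIndiscernibleOver (L := L) c ∅

/-- Two families of tuples are mutually indiscernible if each is indiscernible over the union
of the tuples of the other. -/
def MutuallyIndiscernible {L : FirstOrder.Language.{u, v}} {M : Type (max u v)} [L.Structure M]
    {ι : Type*} [LinearOrder ι] {γ δ : Type*} (a : ι → γ → M) (b : ι → δ → M) : Prop :=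
  IsIndiscernibleOver (L := L) a (⋃ i, Set.range (b i)) ∧
    IsIndiscernibleOver (L := L) b (⋃ i, Set.range (a i))

/-- The family of tuples `(c̄ᵢ : i ∈ ι)` is totally indiscernible: any two tuples of distinct
indices (in any order) realize the same formulas. -/
def IsTotallyIndiscernible {L : FirstOrder.Language.{u, v}} {M : Type (max u v)} [L.Structure M]
    {ι : Type*} [LinearOrder ι] {γ : Type*} (c : ι → γ → M) : Prop :=
  ∀ (n : ℕ) (i j : Fin n → ι), Function.Injective i → Function.Injective j →
    ∀ φ : L.Formula (Fin n × γ),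
      φ.Realize (fun v : Fin n × γ => c (i v.1) v.2) ↔
        φ.Realize (fun v : Fin n × γ => c (j v.1) v.2)

/-- A set in a linear order is dense (in the order) and unbounded above and below. -/
def DenseUnbounded {α : Type*} [LinearOrder α] (S : Set α) : Prop :=
  (∀ x y : α, x < y → ∃ z ∈ S, x < z ∧ z < y) ∧ (∀ x : α, ∃ z ∈ S, z < x) ∧
    (∀ x : α, ∃ z ∈ S, x < z)

/-- `R : α → β → Prop` presents (a structure isomorphic to) the random ordered bipartite
graph `G*`, i.e. the Fraïssé limit of finite ordered bipartite graphs: both parts are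
countable nonempty dense linear orders without endpoints and the edge relation is generic. -/
def IsRandomOBG {α β : Type*} [LinearOrder α] [LinearOrder β] (R : α → β → Prop) : Prop :=
  Countable α ∧ Countable β ∧ Nonempty α ∧ Nonempty β ∧
    (∀ F G : Finset β, Disjoint F G →
      DenseUnbounded {x : α | (∀ f ∈ F, R x f) ∧ ∀ g ∈ G, ¬R x g}) ∧
    (∀ F G : Finset α, Disjoint F G →
      DenseUnbounded {y : β | (∀ f ∈ F, R f y) ∧ ∀ g ∈ G, ¬R g y})

/-- An element of the random ordered bipartite graph `G*`, whose two parts `U(G*)` and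
`V(G*)` are both identified with `ℚ`: `Sum.inl` is the `U`-part, `Sum.inr` the `V`-part. -/
abbrev GStarIdx : Type := ℚ ⊕ ℚ

/-- The index of the pair `(s, q)`: in the `U`-part if `s = true`, in the `V`-part
otherwise. -/
def mkIdx {n : ℕ} (s : Fin n → Bool) (q : Fin n → ℚ) : Fin n → GStarIdx := fun k =>
  bif s k then Sum.inl (q k) else Sum.inr (q k)

/-- Two pairs of elements of `G*` (with edge relation `R`) have the same quantifier-free
`L*`-type, where `L* = {U, ≤_U, V, ≤_V, R}`. -/
def SamePairType (R : ℚ → ℚ → Prop) :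
    GStarIdx → GStarIdx → GStarIdx → GStarIdx → Prop
  | Sum.inl p, Sum.inl q, Sum.inl p', Sum.inl q' => (p ≤ q ↔ p' ≤ q') ∧ (q ≤ p ↔ q' ≤ p')
  | Sum.inr p, Sum.inr q, Sum.inr p', Sum.inr q' => (p ≤ q ↔ p' ≤ q') ∧ (q ≤ p ↔ q' ≤ p')
  | Sum.inl p, Sum.inr q, Sum.inl p', Sum.inr q' => R p q ↔ R p' q'
  | Sum.inr q, Sum.inl p, Sum.inr q', Sum.inl p' => R p q ↔ R p' q'
  | _, _, _, _ => False

/-- Two tuples of elements of `G*` (with edge relation `R`) have the same quantifier-free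
`L*`-type. -/
def SameQfType (R : ℚ → ℚ → Prop) {n : ℕ} (i j : Fin n → GStarIdx) : Prop :=
  ∀ k l : Fin n, SamePairType R (i k) (i l) (j k) (j l)

/-- The variables carried by a coordinate of a mixed tuple: a `U`-index carries an `x̄`-tuple
of length `da`, a `V`-index a `ȳ`-tuple of length `db`. -/
def MixVar (da db : ℕ) : Bool → Type
  | true => Fin da
  | false => Fin db

/-- Choose the `a`-tuple or the `b`-tuple according to the side. -/
def pickSide {M : Type*} {da db : ℕ} (a : Fin da → M) (b : Fin db → M) :
    (s : Bool) → MixVar da db s → M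
  | true, w => a w
  | false, w => b w

/-- The family `(āᵢ : i ∈ U(G*) ≅ ℚ) ∪ (b̄ⱼ : j ∈ V(G*) ≅ ℚ)`, indexed by the random ordered
bipartite graph `G*` with edge relation `R`, is `L*`-indiscernible: index tuples with the same
quantifier-free `L*`-type in `G*` realize the same `L`-formulas in `M`. -/
def IsLStarIndiscernible {L : FirstOrder.Language.{u, v}} {M : Type (max u v)} [L.Structure M]
    (R : ℚ → ℚ → Prop) {da db : ℕ} (a : ℚ → Fin da → M) (b : ℚ → Fin db → M) : Prop :=
  ∀ (n : ℕ) (s : Fin n → Bool) (q q' : Fin n → ℚ),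
    SameQfType R (mkIdx s q) (mkIdx s q') →
      ∀ φ : L.Formula ((k : Fin n) × MixVar da db (s k)),
        φ.Realize (fun v => pickSide (a (q v.1)) (b (q v.1)) (s v.1) v.2) ↔
          φ.Realize (fun v => pickSide (a (q' v.1)) (b (q' v.1)) (s v.1) v.2)

/-!
Suppose that in an `L*`-indiscernible family two pairs of increasing tuples of vertices disagree on
some formula `φ`. Since `R` is generic, blocks of vertices can be arranged so that the `s`-th block
of `U` and the `t`-th block of `V` look like the first or like the second pair, as prescribed by any
finite bipartite graph. Hence `φ` realizes every finite bipartite graph, and by compactness it has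
the independence property.

Conversely, suppose that `φ(x̄; ȳ)` has the independence property. The Ramsey property of finite
ordered bipartite graphs, a consequence of the Hales–Jewett theorem, and compactness give an
`L*`-indiscernible family with `φ(āᵢ; b̄ⱼ)` iff `R i j`. If the sequence `(b̄ⱼ)` is indiscernible
over the first coordinate of a single `ā₀`, then the remaining coordinates can be rechosen so as to
realize any pattern along a fixed increasing sequence of indices `j`. So `φ`, with its first
variable moved to the parameter side, still has the independence property, and one concludes by
induction on the length of `x̄`.
-/

theorem exists_injective_choice {ι α : Type*} [Countable ι] (I : ι → Set α)
    (hI : ∀ j, (I j).Infinite) : ∃ x : ι → α, Function.Injective x ∧ ∀ j, x j ∈ I j := by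
  classical
  obtain ⟨n, hn⟩ := exists_injective_nat ι
  choose t htI ht using fun j => (hI j).exists_subset_card_eq (n j + 1)
  have hall : ∀ s : Finset ι, s.card ≤ (s.biUnion t).card := by
    intro s
    rcases s.eq_empty_or_nonempty with rfl | hs
    · simp
    obtain ⟨j, hj, hmax⟩ := s.exists_max_image n hs
    calc s.card = (s.image n).card := (Finset.card_image_of_injective s hn).symm
      _ ≤ (Finset.range (n j + 1)).card := Finset.card_le_card fun i hi => by
          obtain ⟨j', hj', rfl⟩ := Finset.mem_image.1 hi
          exact Finset.mem_range_succ_iff.2 (hmax j' hj')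
      _ = (t j).card := by rw [Finset.card_range, ht]
      _ ≤ (s.biUnion t).card := Finset.card_le_card (Finset.subset_biUnion_of_mem t hj)
  obtain ⟨x, hx, hxt⟩ := (Finset.all_card_le_biUnion_card_iff_exists_injective t).1 hall
  exact ⟨x, hx, fun j => htI j (hxt j)⟩

theorem exists_colouring_infinite_Ioo (α κ : Type*) [LinearOrder α] [DenselyOrdered α]
    [Countable α] [Countable κ] [Nonempty κ] :
    ∃ c : α → κ, ∀ x y : α, x < y → ∀ k, {z ∈ Set.Ioo x y | c z = k}.Infinite := by
  obtain ⟨z, hz, hzI⟩ := exists_injective_choice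
    (fun j : {p : α × α // p.1 < p.2} × κ × ℕ => Set.Ioo j.1.1.1 j.1.1.2)
    fun j => Set.Ioo_infinite j.1.2
  refine ⟨Function.extend z (fun j => j.2.1) fun _ => Classical.arbitrary κ, fun x y hxy k => ?_⟩
  refine Set.infinite_of_injective_forall_mem (f := fun n : ℕ => z (⟨(x, y), hxy⟩, k, n))
    (fun n n' h => ?_) fun n => ⟨hzI (⟨(x, y), hxy⟩, k, n), hz.extend_apply _ _ _⟩
  simpa using hz h

theorem denseUnbounded_of_forall_Ioo {α : Type*} [LinearOrder α] [NoMinOrder α] [NoMaxOrder α]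
    {S : Set α} (h : ∀ x y : α, x < y → ∃ z ∈ S, x < z ∧ z < y) : DenseUnbounded S := by
  refine ⟨h, fun x => ?_, fun x => ?_⟩
  · obtain ⟨y, hy⟩ := exists_lt x
    obtain ⟨z, hz, -, hzx⟩ := h y x hy
    exact ⟨z, hz, hzx⟩
  · obtain ⟨y, hy⟩ := exists_gt x
    obtain ⟨z, hz, hxz, -⟩ := h x y hy
    exact ⟨z, hz, hxz⟩

-- A vertex decides its edges to all earlier vertices of the other part by a finite set, and every
-- finite set is chosen infinitely often in every interval.
theorem exists_isRandomOBG (α : Type*) [LinearOrder α] [DenselyOrdered α] [NoMinOrder α]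
    [NoMaxOrder α] [Countable α] [Nonempty α] : ∃ R : α → α → Prop, IsRandomOBG R := by
  classical
  obtain ⟨e, he⟩ := exists_injective_nat α
  obtain ⟨c, hc⟩ := exists_colouring_infinite_Ioo α (Finset α)
  have late : ∀ (F H : Finset α) (x y : α), x < y →
      ∃ z, (x < z ∧ z < y) ∧ c z = F ∧ ∀ f ∈ H, e f < e z := by
    intro F H x y hxy
    have hfin : (e ⁻¹' Set.Iic (H.sup e)).Finite :=
      (Set.finite_Iic _).preimage he.injOn
    obtain ⟨z, ⟨hz, hcz⟩, hze⟩ := ((hc x y hxy F).sdiff hfin).nonempty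
    exact ⟨z, hz, hcz, fun f hf => (Finset.le_sup hf).trans_lt (not_le.1 hze)⟩
  refine ⟨fun x y => if e y < e x then y ∈ c x else x ∈ c y, ‹_›, ‹_›, ‹_›, ‹_›,
    fun F G hFG => denseUnbounded_of_forall_Ioo fun x y hxy => ?_,
    fun F G hFG => denseUnbounded_of_forall_Ioo fun x y hxy => ?_⟩
  all_goals
    obtain ⟨z, hz, rfl, hlt⟩ := late F (F ∪ G) x y hxy
    refine ⟨z, ⟨fun f hf => ?_, fun g hg => ?_⟩, hz⟩
    · simpa [hlt f (Finset.mem_union_left _ hf), (hlt f (Finset.mem_union_left _ hf)).le.not_gt]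
    · have := Finset.disjoint_right.1 hFG hg
      simpa [hlt g (Finset.mem_union_right _ hg), (hlt g (Finset.mem_union_right _ hg)).le.not_gt]

namespace IsRandomOBG

variable {α β X Y : Type*} [LinearOrder α] [LinearOrder β] {R : α → β → Prop}

theorem noMaxOrder_left (hR : IsRandomOBG R) : NoMaxOrder α :=
  ⟨fun x => (hR.2.2.2.2.1 ∅ ∅ (Finset.disjoint_empty_left _)).2.2 x |>.imp fun _ h => h.2⟩

theorem noMaxOrder_right (hR : IsRandomOBG R) : NoMaxOrder β :=
  ⟨fun x => (hR.2.2.2.2.2 ∅ ∅ (Finset.disjoint_empty_left _)).2.2 x |>.imp fun _ h => h.2⟩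

theorem exists_pattern_over [Finite X] [Finite Y] [LinearOrder Y] (hR : IsRandomOBG R)
    (u : X ↪ α) (E : X → Y → Prop) : ∃ q : Y ↪o β, ∀ x y, R (u x) (q y) ↔ E x y := by
  classical
  have := Fintype.ofFinite X
  have := Fintype.ofFinite Y
  have := hR.noMaxOrder_right
  have := hR.2.2.2.1
  obtain ⟨s, hs⟩ := Nat.exists_strictMono β
  let e := Fintype.orderIsoFinOfCardEq Y rfl
  have hdisj : ∀ y, Disjoint (({x | E x y} : Finset X).map u) (({x | ¬E x y} : Finset X).map u) :=
    fun y => (Finset.disjoint_map u).2 (Finset.disjoint_filter_filter_not _ _ _)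
  choose q hq hlt hgt using fun y =>
    (hR.2.2.2.2.2 _ _ (hdisj y)).1 (s (e.symm y)) (s (e.symm y + 1)) (hs (Nat.lt_succ_self _))
  have hmono : StrictMono q := fun y y' hy =>
    (hgt y).trans ((hs.monotone (Nat.succ_le_of_lt (e.symm.lt_iff_lt.2 hy))).trans_lt (hlt y'))
  refine ⟨OrderEmbedding.ofStrictMono q hmono, fun x y => ⟨fun h => ?_, fun h => ?_⟩⟩
  · by_contra hE
    exact (hq y).2 (u x) (by simpa using hE) h
  · exact (hq y).1 (u x) (by simpa using h)

theorem exists_pattern [Finite X] [LinearOrder X] [Finite Y] [LinearOrder Y]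
    (hR : IsRandomOBG R) (E : X → Y → Prop) :
    ∃ (p : X ↪o α) (q : Y ↪o β), ∀ x y, R (p x) (q y) ↔ E x y := by
  have := hR.noMaxOrder_left
  have := hR.2.2.1
  have := NoMaxOrder.infinite (α := α)
  obtain ⟨p⟩ := nonempty_orderEmbedding_of_finite_infinite X α
  obtain ⟨q, hq⟩ := hR.exists_pattern_over p.toEmbedding E
  exact ⟨p, q, hq⟩

end IsRandomOBG

theorem exists_seq_of_forall_finset {α : Type*} [DecidableEq α] {Q : Finset α → α → Prop}
    (h : ∀ s, ∃ y, Q s y) : ∃ x : ℕ → α, ∀ n, Q ((Finset.range n).image x) (x n) := by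
  choose y hy using h
  let s : ℕ → Finset α := Nat.rec ∅ fun _ t => insert (y t) t
  have hs : ∀ n, s n = (Finset.range n).image fun i => y (s i) := by
    intro n
    induction n with
    | zero => rfl
    | succ n ih => rw [Finset.range_add_one, Finset.image_insert, ← ih]
  exact ⟨fun n => y (s n), fun n => hs n ▸ hy (s n)⟩

theorem ramsey_nat {κ : Type*} [Finite κ] : ∀ (K : ℕ) (c : (Fin K → ℕ) → κ),
    ∃ (H : ℕ ↪o ℕ) (y : κ), ∀ p : Fin K ↪o ℕ, c (H ∘ p) = y
  | 0, c => ⟨RelEmbedding.refl _, c Fin.elim0, fun _ => congrArg c (Subsingleton.elim _ _)⟩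
  | K + 1, c => by
    have hlim : ∀ h : Fin K → ℕ, ∃ y, ∀ᶠ x in Filter.hyperfilter ℕ, c (Fin.snoc h x) = y :=
      fun h => Ultrafilter.eventually_exists_iff.1 (.of_forall fun _ => ⟨_, rfl⟩)
    choose c' hc' using hlim
    have hnext : ∀ s : Finset ℕ, ∃ x, (∀ z ∈ s, z < x) ∧
        ∀ h : Fin K → s, c (Fin.snoc (fun i => (h i : ℕ)) x) = c' fun i => h i := by
      intro s
      have hlt : ∀ᶠ x in Filter.hyperfilter ℕ, ∀ z ∈ s, z < x :=
        Filter.hyperfilter_le_cofinite <| Nat.cofinite_eq_atTop ▸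
          (Filter.eventually_all_finset s).2 fun z _ => Filter.eventually_gt_atTop z
      exact (hlt.and (Filter.eventually_all.2 fun h => hc' _)).exists
    obtain ⟨x, hx⟩ := exists_seq_of_forall_finset hnext
    have hmem : ∀ {i n}, i < n → x i ∈ (Finset.range n).image x := fun hi =>
      Finset.mem_image_of_mem x (Finset.mem_range.2 hi)
    have hmono : StrictMono x := fun i n hi => (hx n).1 _ (hmem hi)
    obtain ⟨H, y, hy⟩ := ramsey_nat K fun h => c' (x ∘ h)
    refine ⟨H.trans (OrderEmbedding.ofStrictMono x hmono), y, fun p => ?_⟩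
    rw [← hy (Fin.castSuccOrderEmb.trans p)]
    have := (hx (H (p (Fin.last K)))).2 fun i =>
      ⟨x (H (p i.castSucc)), hmem (H.strictMono (p.strictMono (Fin.castSucc_lt_last i)))⟩
    refine Eq.trans (congrArg c ?_) this
    exact (Fin.snoc_init_self _).symm

theorem strictMono_append {α : Type*} [Preorder α] {k m : ℕ} {f : Fin k → α} {g : Fin m → α}
    (hf : StrictMono f) (hg : StrictMono g) (hfg : ∀ a b, f a < g b) :
    StrictMono (Fin.append f g) := by
  intro i j hij
  rw [Fin.lt_def] at hij
  cases i using Fin.addCases with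
  | left a => cases j using Fin.addCases with
    | left a' => simpa using hf hij
    | right b => simpa using hfg a b
  | right b => cases j using Fin.addCases with
    | left a => simp only [Fin.val_natAdd, Fin.val_castAdd] at hij; lia
    | right b' => simpa using hg (by simpa using hij)

theorem product_ramsey (κ : Type*) [Finite κ] (k m l n : ℕ) :
    ∃ N, ∀ d : (Fin k → Fin N) → (Fin m → Fin N) → κ, ∃ (f : Fin l ↪o Fin N) (g : Fin n ↪o Fin N)
      (y : κ), ∀ (p : Fin k ↪o Fin l) (q : Fin m ↪o Fin n), d (f ∘ p) (g ∘ q) = y := by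
  by_contra! hbad
  choose d hd using hbad
  have hbdd : ∀ {K : ℕ} (p : Fin K → ℕ), ∀ᶠ N in Filter.hyperfilter ℕ, ∀ a, p a < N := fun p =>
    Filter.hyperfilter_le_cofinite <| Nat.cofinite_eq_atTop ▸
      Filter.eventually_all.2 fun a => Filter.eventually_gt_atTop (p a)
  have hlim : ∀ (p : Fin k → ℕ) (q : Fin m → ℕ), ∃ y, ∀ᶠ N in Filter.hyperfilter ℕ,
      ∃ (hp : ∀ a, p a < N) (hq : ∀ b, q b < N),
        d N (fun a => ⟨p a, hp a⟩) (fun b => ⟨q b, hq b⟩) = y := fun p q =>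
    Ultrafilter.eventually_exists_iff.1 <|
      ((hbdd p).and (hbdd q)).mono fun N h => ⟨_, h.1, h.2, rfl⟩
  choose e he using hlim
  obtain ⟨H, y, hy⟩ := ramsey_nat (k + m) fun h => e (h ∘ Fin.castAdd m) (h ∘ Fin.natAdd k)
  have hlim_eq : ∀ (p : Fin k ↪o Fin l) (q : Fin m ↪o Fin n),
      e (fun a => H (p a)) (fun b => H (l + q b)) = y := by
    intro p q
    have hpq : StrictMono (Fin.append (fun a => (p a : ℕ)) fun b => l + q b) :=
      strictMono_append p.strictMono (fun b b' h => Nat.add_lt_add_left (q.strictMono h) l)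
        fun a b => (p a).2.trans_le (Nat.le_add_right l _)
    simpa [Function.comp_def] using hy (OrderEmbedding.ofStrictMono _ hpq)
  have hall := Filter.eventually_all.2 fun p : Fin k ↪o Fin l =>
    Filter.eventually_all.2 fun q : Fin m ↪o Fin n => he (fun a => H (p a)) fun b => H (l + q b)
  obtain ⟨N, hl, hn, hN⟩ :=
    ((hbdd fun i : Fin l => H i).and <| (hbdd fun j : Fin n => H (l + j)).and hall).exists
  obtain ⟨p, q, hpq⟩ := hd N
    (OrderEmbedding.ofStrictMono (fun i => ⟨H i, hl i⟩) fun i i' h => H.strictMono h)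
    (OrderEmbedding.ofStrictMono (fun j => ⟨H (l + j), hn j⟩)
      fun j j' h => H.strictMono (Nat.add_lt_add_left h l)) y
  obtain ⟨_, _, h⟩ := hN p q
  exact hpq (h.trans (hlim_eq p q))

section Ramsey

open Combinatorics

/-- The Hales–Jewett theorem for colourings which also see at most `|A|` coordinates: for every
finite `κ` there is a finite `W` such that each `κ`-colouring of pairs consisting of a word in
`W → S` and a partial `A`-tuple in `W` has a combinatorial subspace with a marked coordinate `e v`
for each direction `v`, on which the colour of a word and a tuple of marked coordinates does not
depend on the directions outside that tuple. -/
def HasTraceRamsey (A S η : Type) : Prop :=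
  ∀ (κ : Type) [Finite κ], ∃ (W : Type), Finite W ∧ ∀ F : (A → Option W) → (W → S) → κ,
    ∃ (ℓ : Subspace η S W) (e : η → W), (∀ v, ℓ.idxFun (e v) = Sum.inr v) ∧
      ∀ (τ : A → Option η) (σ σ' : η → S), (∀ a v, τ a = some v → σ v = σ' v) →
        F (fun a => (τ a).map e) (ℓ σ) = F (fun a => (τ a).map e) (ℓ σ')

/-- The product of a subspace and a line, with `none` as the direction of the line. -/
def optionSubspace {η S W ι : Type} (ℓ : Subspace η S W) (r : Line S ι) :
    Subspace (Option η) S (W ⊕ ι) where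
  idxFun := Sum.elim (fun w => (ℓ.idxFun w).map id some) fun i => (r.idxFun i).elim (.inr none) .inl
  proper
    | none => r.proper.elim fun i hi => ⟨.inr i, by simp [hi]⟩
    | some v => (ℓ.proper v).elim fun w hw => ⟨.inl w, by simp [hw]⟩

theorem optionSubspace_apply {η S W ι : Type} (ℓ : Subspace η S W) (r : Line S ι)
    (σ : Option η → S) :
    optionSubspace ℓ r σ = Sum.elim (ℓ fun v => σ (some v)) (r (σ none)) := by
  funext w
  rcases w with w | i
  · cases h : ℓ.idxFun w <;> simp [optionSubspace, Subspace.apply_def, h]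
  · cases h : r.idxFun i <;> simp [optionSubspace, Subspace.apply_def, h]

namespace HasTraceRamsey

variable {A S η : Type}

theorem congr {η' : Type} (f : η ≃ η') (h : HasTraceRamsey A S η) : HasTraceRamsey A S η' := by
  intro κ _
  obtain ⟨W, hW, hF⟩ := h κ
  refine ⟨W, hW, fun F => ?_⟩
  obtain ⟨ℓ, e, he, hinv⟩ := hF F
  refine ⟨ℓ.reindex f (Equiv.refl S) (Equiv.refl W), e ∘ f.symm,
    fun v => by simp [Subspace.reindex, he], fun τ σ σ' hσ => ?_⟩
  have hcoe : ∀ σ : η' → S, ℓ.reindex f (Equiv.refl S) (Equiv.refl W) σ = ℓ (σ ∘ f) :=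
    fun σ => funext fun w => by simp
  rw [hcoe, hcoe]
  simpa using hinv (fun a => (τ a).map f.symm) (σ ∘ f) (σ' ∘ f) fun a v hv => hσ a _ <| by
    simpa [Equiv.symm_apply_eq] using hv

theorem pempty : HasTraceRamsey A S PEmpty := fun _ _ =>
  ⟨PEmpty, inferInstance, fun _ => ⟨⟨Sum.inr, fun v => v.elim⟩, id, fun v => v.elim,
    fun _ σ σ' _ => congrArg _ (congrArg _ (Subsingleton.elim σ σ'))⟩⟩

-- Hales–Jewett in fresh coordinates yields a line along which the colour is constant as long as
-- the tuple avoids these coordinates. Direction `none` is then marked by a coordinate of that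
-- line, and the remaining directions are handled for all values on the line simultaneously.
theorem option [Finite A] [Finite S] (h : HasTraceRamsey A S η) :
    HasTraceRamsey A S (Option η) := by
  classical
  intro κ _
  obtain ⟨W, _, hF⟩ := h (Set A → S → κ)
  obtain ⟨ι, _, hHJ⟩ := Line.exists_mono_in_high_dimension S ((A → Option W) → (W → S) → κ)
  refine ⟨W ⊕ ι, inferInstance, fun F => ?_⟩
  obtain ⟨r, colour, hr⟩ := hHJ fun y t x => F (fun a => (t a).map Sum.inl) (Sum.elim x y)
  obtain ⟨i, hi⟩ := r.proper
  obtain ⟨ℓ, e, he, hinv⟩ := hF fun t x D s =>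
    F (fun a => if a ∈ D then some (Sum.inr i) else (t a).map Sum.inl) (Sum.elim x (r s))
  let e' : Option η → W ⊕ ι := fun v => v.elim (Sum.inr i) fun v => Sum.inl (e v)
  refine ⟨optionSubspace ℓ r, e', ?_, fun τ σ σ' hσ => ?_⟩
  · rintro (_ | v) <;> simp [e', optionSubspace, hi, he]
  obtain ⟨D, hD⟩ : ∃ D : Set A, ∀ a, a ∈ D ↔ τ a = some none := ⟨_, fun _ => Iff.rfl⟩
  have hτ : (fun a => (τ a).map e') =
      fun a => if a ∈ D then some (Sum.inr i) else ((τ a).join.map e).map Sum.inl := by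
    funext a
    match h : τ a with
    | none => simp [hD, h]
    | some none => simp [hD, h, e']
    | some (some v) => simp [hD, h, e']
  have hsome := hinv (fun a => (τ a).join) (fun v => σ (some v)) (fun v => σ' (some v))
    fun a v hv => hσ a (some v) (Option.join_eq_some_iff.1 hv)
  rw [optionSubspace_apply, optionSubspace_apply, hτ]
  refine (congrFun (congrFun hsome D) (σ none)).trans ?_
  by_cases hne : D.Nonempty
  · obtain ⟨a, ha⟩ := hne
    rw [hσ a none ((hD a).1 ha)]
  · have hnot : ∀ a, a ∉ D := fun a ha => hne ⟨a, ha⟩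
    simpa only [hnot, if_false] using congrFun (congrFun ((hr (σ none)).trans (hr (σ' none)).symm)
      fun a => (τ a).join.map e) (ℓ fun v => σ' (some v))

theorem of_finite [Finite A] [Finite S] [Finite η] : HasTraceRamsey A S η :=
  Finite.induction_empty_option (P := HasTraceRamsey A S) (fun f => congr f) pempty option η

end HasTraceRamsey

theorem exists_partite_ramsey (A B I J κ : Type) [Finite A] [Finite B] [Finite I] [Finite J]
    [Finite κ] : ∃ (W : Type), Finite W ∧ ∀ c : (A → W) → (B → Set W) → κ,
      ∃ (e : I → W) (g : J → Set I → Set W), (∀ i j s, e i ∈ g j s ↔ i ∈ s) ∧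
        ∀ (p : A → I) (q : B → J) (s s' : J → Set I),
          (∀ a b, p a ∈ s (q b) ↔ p a ∈ s' (q b)) →
            c (e ∘ p) (fun b => g (q b) (s (q b))) = c (e ∘ p) (fun b => g (q b) (s' (q b))) := by
  classical
  obtain ⟨W, hW, hF⟩ := HasTraceRamsey.of_finite (A := A) (S := Set J) (η := I)
    ((B → J) → Option κ)
  refine ⟨W, hW, fun c => ?_⟩
  obtain ⟨ℓ, e, he, hinv⟩ := hF fun t x q =>
    if h : ∀ a, (t a).isSome then some (c (fun a => (t a).get (h a)) fun b => {w | q b ∈ x w})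
    else none
  let g : J → Set I → Set W := fun j s => {w | (ℓ.idxFun w).elim (fun z => j ∈ z) (· ∈ s)}
  have hg : ∀ (s : J → Set I) j, {w | j ∈ ℓ (fun v => {j | v ∈ s j}) w} = g j (s j) := by
    intro s j
    ext w
    cases h : ℓ.idxFun w <;> simp [g, Subspace.apply_def, h]
  refine ⟨e, g, fun i j s => by simp [g, he], fun p q s s' hs => ?_⟩
  let t : J → Set I := fun j => if j ∈ Set.range q then s j else s' j
  have htq : ∀ b, t (q b) = s (q b) := fun b => if_pos ⟨b, rfl⟩
  have hagree : ∀ a j, p a ∈ t j ↔ p a ∈ s' j := by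
    intro a j
    by_cases hj : j ∈ Set.range q
    · obtain ⟨b, rfl⟩ := hj
      rw [htq, hs]
    · simp only [t, if_neg hj]
  have := congrFun (hinv (fun a => some (p a)) (fun v => {j | v ∈ t j}) (fun v => {j | v ∈ s' j})
    fun a v hv => Set.ext fun j => by simpa [← Option.some.inj hv] using hagree a j) q
  simpa [hg, htq, Function.comp_def] using this

theorem bipartite_ramsey (κ : Type) [Finite κ] (k m : ℕ) {l n : ℕ} (R : Fin l → Fin n → Prop) :
    ∃ (W : Type), Finite W ∧ ∀ c : (Fin k → W) → (Fin m → Set W) → κ,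
      ∃ (e : Fin l → W) (g : Fin n → Set W), (∀ i j, e i ∈ g j ↔ R i j) ∧
        ∀ (p p' : Fin k ↪o Fin l) (q q' : Fin m ↪o Fin n),
          (∀ a b, R (p a) (q b) ↔ R (p' a) (q' b)) → c (e ∘ p) (g ∘ q) = c (e ∘ p') (g ∘ q') := by
  obtain ⟨N, hN⟩ := product_ramsey ((Fin k → Fin m → Prop) → Set κ) k m l n
  obtain ⟨W, hW, hc⟩ := exists_partite_ramsey (Fin k) (Fin m) (Fin N) (Fin N) κ
  refine ⟨W, hW, fun c => ?_⟩
  obtain ⟨e, g, heg, hinv⟩ := hc c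
  obtain ⟨f, f', D, hD⟩ := hN fun t r E => {y | ∃ s : Fin N → Set (Fin N),
    (∀ a b, t a ∈ s (r b) ↔ E a b) ∧ c (e ∘ t) (fun b => g (r b) (s (r b))) = y}
  let s : Fin N → Set (Fin N) := fun z => {w | ∃ i j, f i = w ∧ f' j = z ∧ R i j}
  have hs : ∀ i j, f i ∈ s (f' j) ↔ R i j := by simp [s]
  refine ⟨e ∘ f, fun j => g (f' j) (s (f' j)), fun i j => by simp [heg, hs],
    fun p p' q q' h => ?_⟩
  have hmem : c (e ∘ f ∘ p) (fun b => g (f' (q b)) (s (f' (q b)))) ∈ D fun a b => R (p a) (q b) :=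
    hD p q ▸ ⟨s, fun a b => hs _ _, rfl⟩
  rw [← hD p' q'] at hmem
  obtain ⟨s', hs', heq⟩ := hmem
  exact heq.symm.trans (hinv _ _ _ _ fun a b => (hs' a b).trans ((h a b).trans (hs _ _).symm))

theorem exists_orderEmbedding_extend {k l K : ℕ} (hk : k ≤ K) (p : Fin k ↪o Fin l) :
    ∃ P : Fin K ↪o Fin (l + K), (∀ a, P (Fin.castLE hk a) = Fin.castAdd K (p a)) ∧
      ∀ a : Fin K, k ≤ a → l ≤ P a := by
  let P : Fin K → Fin (l + K) := fun a =>
    if h : a < k then Fin.castAdd K (p ⟨a, h⟩) else Fin.natAdd l a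
  have hP : StrictMono P := by
    intro a b hab
    rw [Fin.lt_def] at hab ⊢
    by_cases hb : b < k
    · simpa [P, hb, hab.trans hb] using hab
    · by_cases ha : a < k <;> simp [P, ha, hb] <;> lia
  exact ⟨OrderEmbedding.ofStrictMono P hP, fun a => by simp [P], fun a ha => by simp [P, ha.not_gt]⟩

-- All arities are raised to the largest one, by adding isolated vertices on top of both parts.
theorem bipartite_ramsey_family {ι : Type} [Finite ι] (κ : Type) [Finite κ] (k m : ι → ℕ)
    {l n : ℕ} (R : Fin l → Fin n → Prop) :
    ∃ (W : Type), Finite W ∧ ∀ c : ∀ i, (Fin (k i) → W) → (Fin (m i) → Set W) → κ,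
      ∃ (e : Fin l → W) (g : Fin n → Set W), (∀ i j, e i ∈ g j ↔ R i j) ∧
        ∀ i (p p' : Fin (k i) ↪o Fin l) (q q' : Fin (m i) ↪o Fin n),
          (∀ a b, R (p a) (q b) ↔ R (p' a) (q' b)) →
            c i (e ∘ p) (g ∘ q) = c i (e ∘ p') (g ∘ q') := by
  obtain ⟨K, hK⟩ := (Set.finite_range k).bddAbove
  obtain ⟨M, hM⟩ := (Set.finite_range m).bddAbove
  replace hK : ∀ i, k i ≤ K := fun i => hK ⟨i, rfl⟩
  replace hM : ∀ i, m i ≤ M := fun i => hM ⟨i, rfl⟩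
  obtain ⟨W, hW, hc⟩ := bipartite_ramsey (ι → κ) K M fun (i : Fin (l + K)) (j : Fin (n + M)) =>
    ∃ (hi : i < l) (hj : j < n), R ⟨i, hi⟩ ⟨j, hj⟩
  refine ⟨W, hW, fun c => ?_⟩
  obtain ⟨e, g, heg, hinv⟩ :=
    hc fun P Q i => c i (P ∘ Fin.castLE (hK i)) (Q ∘ Fin.castLE (hM i))
  refine ⟨e ∘ Fin.castAdd K, g ∘ Fin.castAdd M, fun i j => by simp [heg],
    fun i p p' q q' h => ?_⟩
  obtain ⟨P, hPp, hP⟩ := exists_orderEmbedding_extend (hK i) p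
  obtain ⟨P', hPp', hP'⟩ := exists_orderEmbedding_extend (hK i) p'
  obtain ⟨Q, hQq, hQ⟩ := exists_orderEmbedding_extend (hM i) q
  obtain ⟨Q', hQq', hQ'⟩ := exists_orderEmbedding_extend (hM i) q'
  have := congrFun (hinv P P' Q Q' fun a b => ?_) i
  · simpa [Function.comp_def, hPp, hPp', hQq, hQq'] using this
  · by_cases ha : a < k i
    · by_cases hb : b < m i
      · obtain ⟨a, rfl⟩ : ∃ a', Fin.castLE (hK i) a' = a := ⟨⟨a, ha⟩, rfl⟩
        obtain ⟨b, rfl⟩ : ∃ b', Fin.castLE (hM i) b' = b := ⟨⟨b, hb⟩, rfl⟩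
        simpa [hPp, hPp', hQq, hQq'] using h a b
      · simp [(hQ b (not_lt.1 hb)).not_gt, (hQ' b (not_lt.1 hb)).not_gt]
    · simp [(hP a (not_lt.1 ha)).not_gt, (hP' a (not_lt.1 ha)).not_gt]

end Ramsey

section Indiscernibles

variable {L : FirstOrder.Language.{u, v}}

open Classical in
/-- `φ` or its negation, according to the truth value of `P`. -/
noncomputable def signedFormula {α : Type*} (φ : L.Formula α) (P : Prop) : L.Formula α :=
  if P then φ else φ.not

theorem realize_signedFormula {α M : Type*} [L.Structure M] {φ : L.Formula α} {P : Prop}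
    {w : α → M} : (signedFormula φ P).Realize w ↔ (φ.Realize w ↔ P) := by
  by_cases hP : P <;> simp [signedFormula, hP, Formula.realize_not]

theorem exists_realize_of_finitely_realizable (T : L.Theory) {X : Type} {ι : Type*}
    (φ : ι → L.Formula X)
    (h : ∀ s : Finset ι, ∃ (M : Theory.ModelType.{u, v, max u v} T) (w : X → M),
      ∀ i ∈ s, (φ i).Realize w) :
    ∃ (M : Theory.ModelType.{u, v, max u v} T) (w : X → M), ∀ i, (φ i).Realize w := by
  classical
  let T' : (L[[X]]).Theory :=
    (L.lhomWithConstants X).onTheory T ∪ Set.range fun i => Formula.equivSentence (φ i)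
  have hsat : T'.IsSatisfiable := by
    rw [Theory.isSatisfiable_iff_isFinitelySatisfiable]
    intro T₀ hT₀
    let idx : L[[X]].Sentence → Option ι := fun σ =>
      if h : ∃ i, Formula.equivSentence (φ i) = σ then some h.choose else none
    obtain ⟨M, w, hw⟩ := h (T₀.biUnion fun σ => (idx σ).toFinset)
    let : (constantsOn X).Structure M := constantsOn.structure w
    have hT : M ⊨ (L.lhomWithConstants X).onTheory T := (LHom.onTheory_model _ _).2 inferInstance
    have : M ⊨ (T₀ : (L[[X]]).Theory) := by
      refine ⟨fun σ hσ => ?_⟩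
      rcases hT₀ hσ with hσT | hσφ
      · exact hT.realize_of_mem _ hσT
      · replace hσφ : ∃ i, Formula.equivSentence (φ i) = σ := hσφ
        rw [← hσφ.choose_spec, Formula.realize_equivSentence]
        exact hw _ (Finset.mem_biUnion.2 ⟨σ, hσ, by simp [idx, hσφ]⟩)
    exact ⟨Theory.ModelType.of _ M⟩
  obtain ⟨M⟩ := hsat
  let := (L.lhomWithConstants X).reduct M
  have hM : M ⊨ T := (LHom.onTheory_model (L.lhomWithConstants X) T).1
    (M.is_model.mono Set.subset_union_left)
  exact ⟨Theory.ModelType.of T M, fun x => (L.con x : M), fun i =>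
    (Formula.realize_equivSentence M (φ i)).1 (M.is_model.realize_of_mem _ (Or.inr ⟨i, rfl⟩))⟩

/-- `φ(x̄; ȳ)` realizes the bipartite graph `E` in some model of `T`: vertices are interpreted by
tuples so that `φ` becomes the edge relation. The independence property is the case of the
membership relation between `ℕ` and `Set ℕ`. -/
def RealizesPattern (T : L.Theory) {α β I J : Type*} (φ : L.Formula (α ⊕ β))
    (E : I → J → Prop) : Prop :=
  ∃ (M : Theory.ModelType.{u, v, max u v} T) (a : I → α → M) (b : J → β → M),
    ∀ i j, φ.Realize (Sum.elim (a i) (b j)) ↔ E i j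

theorem formulaHasIP_iff_realizesPattern {T : L.Theory} {α β : Type*} {φ : L.Formula (α ⊕ β)} :
    FormulaHasIP T φ ↔ RealizesPattern T φ fun (i : ℕ) (S : Set ℕ) => i ∈ S :=
  Iff.rfl

/-- The joint assignment of the tuples `a (p x)` and `b (q y)`, for `x : X` and `y : Y`. -/
def jointVal {M I J α β X Y : Type*} (a : I → α → M) (b : J → β → M) (p : X → I) (q : Y → J) :
    X × α ⊕ Y × β → M :=
  Sum.elim (fun v => a (p v.1) v.2) fun v => b (q v.1) v.2

section JointVal

variable {M I J α β X Y : Type*}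

theorem exists_eq_jointVal (w : I × α ⊕ J × β → M) :
    ∃ (a : I → α → M) (b : J → β → M), w = jointVal a b id id :=
  ⟨fun i x => w (.inl (i, x)), fun j y => w (.inr (j, y)), by ext (v | v) <;> rfl⟩

theorem realize_relabel_jointVal [L.Structure M] {X' Y' : Type*} {a : I → α → M} {b : J → β → M}
    {p : X → I} {q : Y → J} {f : X' → X} {g : Y' → Y} {φ : L.Formula (X' × α ⊕ Y' × β)} :
    (φ.relabel (Sum.map (Prod.map f id) (Prod.map g id))).Realize (jointVal a b p q) ↔
      φ.Realize (jointVal a b (p ∘ f) (q ∘ g)) := by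
  rw [Formula.realize_relabel, jointVal, Sum.elim_comp_map]
  rfl

theorem realize_signedFormula_jointVal [L.Structure M] {a : I → α → M} {b : J → β → M} {i : I}
    {j : J} {φ : L.Formula (α ⊕ β)} {P : Prop} :
    (signedFormula (φ.relabel (Sum.map (Prod.mk i) (Prod.mk j))) P).Realize (jointVal a b id id) ↔
      (φ.Realize (Sum.elim (a i) (b j)) ↔ P) := by
  rw [realize_signedFormula, Formula.realize_relabel, jointVal, Sum.elim_comp_map]
  rfl

end JointVal

namespace RealizesPattern

variable {T : L.Theory} {α β : Type} {φ : L.Formula (α ⊕ β)}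

theorem comap {I J I' J' : Type*} {E : I → J → Prop} (h : RealizesPattern T φ E) (f : I' → I)
    (g : J' → J) : RealizesPattern T φ fun i j => E (f i) (g j) := by
  obtain ⟨M, a, b, hab⟩ := h
  exact ⟨M, a ∘ f, b ∘ g, fun i j => hab (f i) (g j)⟩

theorem relabel {α' β' I J : Type*} {E : I → J → Prop} (h : RealizesPattern T φ E) (f : α ≃ α')
    (g : β ≃ β') : RealizesPattern T (φ.relabel (Sum.map f g)) E := by
  obtain ⟨M, a, b, hab⟩ := h
  refine ⟨M, fun i => a i ∘ f.symm, fun j => b j ∘ g.symm, fun i j => ?_⟩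
  simp [Formula.realize_relabel, Sum.elim_comp_map, Function.comp_assoc, hab]

theorem of_formulaHasIP {I J : Type*} [Countable I] (h : FormulaHasIP T φ) (E : I → J → Prop) :
    RealizesPattern T φ E := by
  obtain ⟨e, he⟩ := exists_injective_nat I
  have := (formulaHasIP_iff_realizesPattern.1 h).comap e fun j => e '' {i | E i j}
  simpa [he.mem_set_image] using this

theorem of_forall_fin (h : ∀ (k m : ℕ) (E : Fin k → Fin m → Prop), RealizesPattern T φ E)
    {I J : Type} (E : I → J → Prop) : RealizesPattern T φ E := by
  classical
  have hfin : ∀ (U : Finset I) (V : Finset J),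
      RealizesPattern T φ fun (i : U) (j : V) => E i j := fun U V => by
    simpa using (h _ _ fun i j => E (U.equivFin.symm i) (V.equivFin.symm j)).comap
      U.equivFin V.equivFin
  obtain ⟨M, w, hw⟩ := exists_realize_of_finitely_realizable T
    (fun x : I × J =>
      signedFormula (φ.relabel (Sum.map (Prod.mk x.1) (Prod.mk x.2))) (E x.1 x.2)) fun s => by
    obtain ⟨M, a, b, hab⟩ := hfin (s.image Prod.fst) (s.image Prod.snd)
    obtain ⟨a, rfl⟩ := Subtype.val_injective.surjective_comp_right a
    obtain ⟨b, rfl⟩ := Subtype.val_injective.surjective_comp_right b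
    exact ⟨M, jointVal a b id id, fun x hx => realize_signedFormula_jointVal.2
      (hab ⟨x.1, Finset.mem_image_of_mem _ hx⟩ ⟨x.2, Finset.mem_image_of_mem _ hx⟩)⟩
  obtain ⟨a, b, rfl⟩ := exists_eq_jointVal w
  exact ⟨M, a, b, fun i j => realize_signedFormula_jointVal.1 (hw (i, j))⟩

end RealizesPattern

/-- No formula in finitely many variables has the independence property with respect to `T`. -/
def IsNIP (T : L.Theory) : Prop :=
  ∀ (m n : ℕ) (φ : L.Formula (Fin m ⊕ Fin n)), ¬FormulaHasIP T φ

theorem IsNIP.not_formulaHasIP {T : L.Theory} (hT : IsNIP T) {α β : Type} [Finite α] [Finite β]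
    (φ : L.Formula (α ⊕ β)) : ¬FormulaHasIP T φ := by
  obtain ⟨m, ⟨f⟩⟩ := Finite.exists_equiv_fin α
  obtain ⟨n, ⟨g⟩⟩ := Finite.exists_equiv_fin β
  exact fun h => hT m n _ ((formulaHasIP_iff_realizesPattern.1 h).relabel f g)

/-- Edge-indiscernibility of a family `(aᵢ : i ∈ I) ∪ (bⱼ : j ∈ J)` indexed by an ordered bipartite
graph `R`: increasing tuples of vertices which induce the same graph realize the same formulas.
This is `L*`-indiscernibility for arbitrary parts, tested on increasing tuples only. -/
def IsEdgeIndiscernible {M : Type*} [L.Structure M] {I J α β : Type*} [LinearOrder I]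
    [LinearOrder J] (R : I → J → Prop) (a : I → α → M) (b : J → β → M) : Prop :=
  ∀ (k m : ℕ) (p p' : Fin k ↪o I) (q q' : Fin m ↪o J),
    (∀ i j, R (p i) (q j) ↔ R (p' i) (q' j)) →
      ∀ φ : L.Formula (Fin k × α ⊕ Fin m × β),
        φ.Realize (jointVal a b p q) ↔ φ.Realize (jointVal a b p' q')

theorem exists_factorization_of_le_iff_le {X I : Type*} [Finite X] [LinearOrder I] {x x' : X → I}
    (h : ∀ u v, x u ≤ x v ↔ x' u ≤ x' v) :
    ∃ (n : ℕ) (r : X → Fin n) (p p' : Fin n ↪o I),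
      Function.Surjective r ∧ x = p ∘ r ∧ x' = p' ∘ r := by
  classical
  have := Fintype.ofFinite X
  let o := (Finset.univ.image x).orderIsoOfFin rfl
  let r : X → Fin _ := fun u => o.symm ⟨x u, Finset.mem_image_of_mem _ (Finset.mem_univ u)⟩
  have hle : ∀ u v, r u ≤ r v ↔ x u ≤ x v := fun u v => o.symm.le_iff_le
  have hr : Function.Surjective r := fun i => by
    obtain ⟨u, -, hu⟩ := Finset.mem_image.1 (o i).2
    exact ⟨u, o.symm_apply_eq.2 (Subtype.ext hu)⟩
  have hlift : ∀ y : X → I, (∀ u v, r u ≤ r v ↔ y u ≤ y v) → ∃ p : Fin _ ↪o I, y = p ∘ r := by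
    intro y hy
    refine ⟨OrderEmbedding.ofMapLEIff (y ∘ Function.surjInv hr) fun i j => ?_, funext fun u => ?_⟩
    · rw [Function.comp_apply, Function.comp_apply, ← hy, Function.surjInv_eq hr,
        Function.surjInv_eq hr]
    · have := Function.surjInv_eq hr (r u)
      exact ((hy _ _).1 this.ge).antisymm ((hy _ _).1 this.le)
  obtain ⟨p, hp⟩ := hlift x hle
  obtain ⟨p', hp'⟩ := hlift x' fun u v => (hle u v).trans (h u v)
  exact ⟨_, r, p, p', hr, hp, hp'⟩

namespace IsEdgeIndiscernible

variable {M : Type (max u v)} {I J α β : Type*} [L.Structure M] [LinearOrder I] [LinearOrder J]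
  {R : I → J → Prop} {a : I → α → M} {b : J → β → M}

theorem swap (h : IsEdgeIndiscernible (L := L) R a b) :
    IsEdgeIndiscernible (L := L) (fun j i => R i j) b a := fun k m p p' q q' hpq φ => by
  simpa [Formula.realize_relabel, jointVal] using
    h m k q q' p p' (fun i j => hpq j i) (φ.relabel Sum.swap)

theorem comp_left {α' : Type*} (h : IsEdgeIndiscernible (L := L) R a b) (f : α' → α) :
    IsEdgeIndiscernible (L := L) R (fun i => a i ∘ f) b := fun k m p p' q q' hpq φ => by
  have := h k m p p' q q' hpq (φ.relabel (Sum.map (Prod.map id f) id))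
  rwa [Formula.realize_relabel, Formula.realize_relabel, jointVal, jointVal, Sum.elim_comp_map,
    Sum.elim_comp_map] at this

theorem isIndiscernibleOver (h : IsEdgeIndiscernible (L := L) (fun _ _ => True) a b) :
    IsIndiscernibleOver (L := L) a (⋃ j, Set.range (b j)) := by
  intro n m i j hi hj c hc φ
  simp only [Set.mem_iUnion, Set.mem_range] at hc
  choose t y hty using hc
  obtain ⟨N, r, q, -, -, ht, -⟩ := exists_factorization_of_le_iff_le (x := t) fun _ _ => Iff.rfl
  have := h n N (.ofStrictMono i hi) (.ofStrictMono j hj) q q (fun _ _ => Iff.rfl)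
    (φ.relabel (Sum.map id fun l => (r l, y l)))
  have hc : (fun v => b (q v.1) v.2) ∘ (fun l => (r l, y l)) = c := funext fun l => by
    rw [← hty, ht]; rfl
  rwa [Formula.realize_relabel, Formula.realize_relabel, jointVal, jointVal, Sum.elim_comp_map,
    Sum.elim_comp_map, hc] at this

theorem mutuallyIndiscernible {b : I → β → M}
    (h : IsEdgeIndiscernible (L := L) (fun _ _ : I => True) a b) :
    MutuallyIndiscernible (L := L) a b :=
  ⟨h.isIndiscernibleOver, h.swap.isIndiscernibleOver⟩

end IsEdgeIndiscernible

theorem sameQfType_mkIdx {R : ℚ → ℚ → Prop} {n : ℕ} {s : Fin n → Bool} {q q' : Fin n → ℚ} :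
    SameQfType R (mkIdx s q) (mkIdx s q') ↔
      (∀ k l, s k = s l → (q k ≤ q l ↔ q' k ≤ q' l)) ∧
        ∀ k l, s k = true → s l = false → (R (q k) (q l) ↔ R (q' k) (q' l)) := by
  refine ⟨fun h => ⟨fun k l hkl => ?_, fun k l hk hl => ?_⟩, fun ⟨hle, hR⟩ k l => ?_⟩
  · have := h k l
    cases hk : s k <;> simp_all [mkIdx, SamePairType]
  · simpa [mkIdx, hk, hl, SamePairType] using h k l
  · cases hk : s k <;> cases hl : s l <;> simp [mkIdx, hk, hl, SamePairType]
    all_goals simp_all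

/-- The variables of a mixed tuple, separated into those of its `U`-part and its `V`-part. -/
def mixVarEquiv {da db n : ℕ} (s : Fin n → Bool) :
    ((k : Fin n) × MixVar da db (s k)) ≃
      {k // s k = true} × Fin da ⊕ {k // s k = false} × Fin db where
  toFun v := match hs : s v.1, v.2 with
    | true, x => .inl (⟨v.1, hs⟩, x)
    | false, x => .inr (⟨v.1, hs⟩, x)
  invFun := Sum.elim (fun v => ⟨v.1, cast (congrArg (MixVar da db) v.1.2.symm) v.2⟩)
    fun v => ⟨v.1, cast (congrArg (MixVar da db) v.1.2.symm) v.2⟩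
  left_inv v := by
    dsimp only
    split
    all_goals exact Sigma.ext rfl ((cast_heq _ _).trans (HEq.symm ‹_›))
  right_inv v := by
    rcases v with ⟨⟨k, hk⟩, x⟩ | ⟨⟨k, hk⟩, x⟩ <;> dsimp only [Sum.elim_inl, Sum.elim_inr] <;> split
    all_goals grind

theorem pickSide_comp_mixVarEquiv_symm {M : Type*} {da db n : ℕ} {a : ℚ → Fin da → M}
    {b : ℚ → Fin db → M} (s : Fin n → Bool) (q : Fin n → ℚ) :
    (fun v => pickSide (a (q v.1)) (b (q v.1)) (s v.1) v.2) ∘ (mixVarEquiv s).symm =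
      jointVal a b (fun k : {k // s k = true} => q k) fun k : {k // s k = false} => q k := by
  have hcast : ∀ k t (h : s k = t) (x : MixVar da db t),
      pickSide (a (q k)) (b (q k)) (s k) (cast (congrArg _ h.symm) x) =
        pickSide (a (q k)) (b (q k)) t x := by
    rintro k _ rfl x
    rfl
  ext (v | v)
  exacts [hcast v.1 true v.1.2 v.2, hcast v.1 false v.1.2 v.2]

section LStar

variable {M : Type (max u v)} [L.Structure M] {R : ℚ → ℚ → Prop} {da db : ℕ} {a : ℚ → Fin da → M}
  {b : ℚ → Fin db → M}

theorem IsLStarIndiscernible.isEdgeIndiscernible (h : IsLStarIndiscernible (L := L) R a b) :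
    IsEdgeIndiscernible (L := L) R a b := by
  intro k m p p' q q' hpq φ
  let s : Fin (k + m) → Bool := Fin.append (fun _ => true) fun _ => false
  let left (i : Fin k) : {l // s l = true} := ⟨i.castAdd m, Fin.append_left _ _ _⟩
  let right (j : Fin m) : {l // s l = false} := ⟨j.natAdd k, Fin.append_right _ _ _⟩
  have hval : ∀ (p : Fin k → ℚ) (q : Fin m → ℚ),
      jointVal a b ((fun l => Fin.append p q l.1) ∘ left) ((fun l => Fin.append p q l.1) ∘ right) =
        jointVal a b p q := fun p q => by
    simp [Function.comp_def, left, right]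
  have hqf : SameQfType R (mkIdx s (Fin.append p q)) (mkIdx s (Fin.append p' q')) := by
    rw [sameQfType_mkIdx]
    refine ⟨fun i j => ?_, fun i j => ?_⟩ <;>
      cases i using Fin.addCases <;> cases j using Fin.addCases <;> simp [s, hpq]
  have := h (k + m) s _ _ hqf
    ((φ.relabel (Sum.map (Prod.map left id) (Prod.map right id))).relabel (mixVarEquiv s).symm)
  rwa [Formula.realize_relabel, pickSide_comp_mixVarEquiv_symm, realize_relabel_jointVal, hval,
    Formula.realize_relabel, pickSide_comp_mixVarEquiv_symm, realize_relabel_jointVal,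
    hval] at this

theorem IsEdgeIndiscernible.isLStarIndiscernible (h : IsEdgeIndiscernible (L := L) R a b) :
    IsLStarIndiscernible (L := L) R a b := by
  intro n s q q' hqf φ
  obtain ⟨hle, hR⟩ := sameQfType_mkIdx.1 hqf
  have hsort : ∀ t, ∃ (k : ℕ) (r : {l // s l = t} → Fin k) (p p' : Fin k ↪o ℚ),
      Function.Surjective r ∧ (fun l : {l // s l = t} => q l) = p ∘ r ∧
        (fun l : {l // s l = t} => q' l) = p' ∘ r := fun t =>
    exists_factorization_of_le_iff_le fun i j => hle i j (i.2.trans j.2.symm)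
  obtain ⟨k, r, p, p', hr, hp, hp'⟩ := hsort true
  obtain ⟨m, t, o, o', ht, ho, ho'⟩ := hsort false
  have hpo : ∀ i j, R (p i) (o j) ↔ R (p' i) (o' j) := hr.forall.2 fun i => ht.forall.2 fun j => by
    have := hR i j i.2 j.2
    rwa [congrFun hp i, congrFun hp' i, congrFun ho j, congrFun ho' j] at this
  have := h k m p p' o o' hpo
    ((φ.relabel (mixVarEquiv s)).relabel (Sum.map (Prod.map r id) (Prod.map t id)))
  rw [realize_relabel_jointVal, realize_relabel_jointVal, ← hp, ← hp', ← ho, ← ho',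
    ← pickSide_comp_mixVarEquiv_symm, ← pickSide_comp_mixVarEquiv_symm] at this
  simpa [Formula.realize_relabel, Function.comp_assoc] using this

end LStar

namespace IsEdgeIndiscernible

variable {T : L.Theory} {M : Type (max u v)} [L.Structure M] [Nonempty M] [M ⊨ T] {I J : Type*}
  {α β : Type} [LinearOrder I] [LinearOrder J] {R : I → J → Prop} {a : I → α → M} {b : J → β → M}

theorem realizesPattern (h : IsEdgeIndiscernible (L := L) R a b) (hR : IsRandomOBG R) {k m : ℕ}
    {p p' : Fin k ↪o I} {q q' : Fin m ↪o J} {φ : L.Formula (Fin k × α ⊕ Fin m × β)}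
    (hφ : φ.Realize (jointVal a b p q)) (hφ' : ¬φ.Realize (jointVal a b p' q')) {l n : ℕ}
    (E : Fin l → Fin n → Prop) : RealizesPattern T φ E := by
  classical
  obtain ⟨P, Q, hPQ⟩ := hR.exists_pattern fun (x : Fin l ×ₗ Fin k) (y : Fin n ×ₗ Fin m) =>
    if E (ofLex x).1 (ofLex y).1 then R (p (ofLex x).2) (q (ofLex y).2)
    else R (p' (ofLex x).2) (q' (ofLex y).2)
  let P' (t : Fin l) : Fin k ↪o I :=
    (OrderEmbedding.ofStrictMono (fun i => toLex (t, i)) fun _ _ => Prod.Lex.right _).trans P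
  let Q' (t : Fin n) : Fin m ↪o J :=
    (OrderEmbedding.ofStrictMono (fun i => toLex (t, i)) fun _ _ => Prod.Lex.right _).trans Q
  have hPQ' : ∀ s t i j, R (P' s i) (Q' t j) ↔
      if E s t then R (p i) (q j) else R (p' i) (q' j) :=
    fun s t i j => hPQ (toLex (s, i)) (toLex (t, j))
  refine ⟨Theory.ModelType.of T M, fun t v => a (P' t v.1) v.2, fun t v => b (Q' t v.1) v.2,
    fun s t => ?_⟩
  by_cases hE : E s t
  · refine iff_of_true ((h k m p (P' s) q (Q' t) (fun i j => ?_) φ).1 hφ) hE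
    rw [hPQ', if_pos hE]
  · refine iff_of_false (mt (h k m p' (P' s) q' (Q' t) (fun i j => ?_) φ).2 hφ') hE
    rw [hPQ', if_neg hE]

theorem true_of_isNIP [Finite α] [Finite β] (h : IsEdgeIndiscernible (L := L) R a b)
    (hR : IsRandomOBG R) (hT : IsNIP T) :
    IsEdgeIndiscernible (L := L) (fun _ _ => True) a b := by
  have himp : ∀ (k m : ℕ) (p p' : Fin k ↪o I) (q q' : Fin m ↪o J)
      (φ : L.Formula (Fin k × α ⊕ Fin m × β)),
      φ.Realize (jointVal a b p q) → φ.Realize (jointVal a b p' q') := by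
    intro k m p p' q q' φ hφ
    by_contra hφ'
    exact hT.not_formulaHasIP φ (formulaHasIP_iff_realizesPattern.2
      (.of_forall_fin (fun _ _ E => h.realizesPattern hR hφ hφ' E) _))
  exact fun k m p p' q q' _ φ => ⟨himp k m p p' q q' φ, himp k m p' p q' q φ⟩

end IsEdgeIndiscernible

theorem exists_eq_orderEmbOfFin_comp {I : Type*} [LinearOrder I] {U : Finset I} {k : ℕ}
    {p : Fin k ↪o I} (hp : ∀ i, p i ∈ U) :
    ∃ p₀ : Fin k ↪o Fin U.card, (p : Fin k → I) = U.orderEmbOfFin rfl ∘ p₀ := by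
  let o := U.orderIsoOfFin rfl
  refine ⟨.ofMapLEIff (fun i => o.symm ⟨p i, hp i⟩) fun i j => ?_, funext fun i => ?_⟩
  · rw [o.symm.le_iff_le, Subtype.mk_le_mk, p.le_iff_le]
  · exact congrArg Subtype.val (o.apply_symm_apply ⟨p i, hp i⟩).symm

/-- An instance of edge-indiscernibility over `R`: a formula, together with two pairs of increasing
tuples of vertices which induce the same graph and hence have to agree on it. -/
structure EdgeInstance (L : FirstOrder.Language.{u, v}) {I J : Type*} [LinearOrder I]
    [LinearOrder J] (R : I → J → Prop) (α β : Type*) where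
  {k m : ℕ}
  (p p' : Fin k ↪o I)
  (q q' : Fin m ↪o J)
  edge_iff : ∀ i j, R (p i) (q j) ↔ R (p' i) (q' j)
  formula : L.Formula (Fin k × α ⊕ Fin m × β)

namespace EdgeInstance

variable {I J α β : Type} [LinearOrder I] [LinearOrder J] {R : I → J → Prop}

/-- The family `(aᵢ), (bⱼ)` satisfies the instance `x` of edge-indiscernibility. -/
def Holds {M : Type*} [L.Structure M] (x : EdgeInstance L R α β) (a : I → α → M) (b : J → β → M) :
    Prop :=
  x.formula.Realize (jointVal a b x.p x.q) ↔ x.formula.Realize (jointVal a b x.p' x.q')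

/-- The formula expressing that the family of variables satisfies the instance `x`. -/
noncomputable def toFormula (x : EdgeInstance L R α β) : L.Formula (I × α ⊕ J × β) :=
  (x.formula.relabel (Sum.map (Prod.map x.p id) (Prod.map x.q id))).iff
    (x.formula.relabel (Sum.map (Prod.map x.p' id) (Prod.map x.q' id)))

theorem realize_toFormula {M : Type*} [L.Structure M] {x : EdgeInstance L R α β}
    {a : I → α → M} {b : J → β → M} :
    x.toFormula.Realize (jointVal a b id id) ↔ x.Holds a b := by
  rw [toFormula, Formula.realize_iff, realize_relabel_jointVal, realize_relabel_jointVal]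
  rfl

end EdgeInstance

theorem exists_edgeInvariant_fin {T : L.Theory} {α β : Type} {φ : L.Formula (α ⊕ β)}
    (h : FormulaHasIP T φ) {l n : ℕ} (R : Fin l → Fin n → Prop) {ι : Type*} [Finite ι]
    (k m : ι → ℕ) (ψ : ∀ i, L.Formula (Fin (k i) × α ⊕ Fin (m i) × β)) :
    ∃ (M : Theory.ModelType.{u, v, max u v} T) (a : Fin l → α → M) (b : Fin n → β → M),
      (∀ i j, φ.Realize (Sum.elim (a i) (b j)) ↔ R i j) ∧
        ∀ i (p p' : Fin (k i) ↪o Fin l) (q q' : Fin (m i) ↪o Fin n),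
          (∀ r s, R (p r) (q s) ↔ R (p' r) (q' s)) →
            ((ψ i).Realize (jointVal a b p q) ↔ (ψ i).Realize (jointVal a b p' q')) := by
  obtain ⟨N, ⟨f⟩⟩ := Finite.exists_equiv_fin ι
  obtain ⟨W, hW, hc⟩ := bipartite_ramsey_family Prop (k ∘ f.symm) (m ∘ f.symm) R
  obtain ⟨M, a, b, hab⟩ := RealizesPattern.of_formulaHasIP h fun (w : W) (S : Set W) => w ∈ S
  obtain ⟨e, g, heg, hinv⟩ := hc fun i P Q => (ψ (f.symm i)).Realize (jointVal a b P Q)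
  exact ⟨M, a ∘ e, b ∘ g, fun i j => (hab _ _).trans (heg i j),
    f.symm.surjective.forall.2 fun i p p' q q' hpq => iff_of_eq (hinv i p p' q q' hpq)⟩

theorem exists_edgeInvariant_finset {T : L.Theory} {α β I J : Type} [LinearOrder I] [LinearOrder J]
    {φ : L.Formula (α ⊕ β)} (h : FormulaHasIP T φ) (R : I → J → Prop) (U : Finset I) (V : Finset J)
    (s : Finset (EdgeInstance L R α β)) :
    ∃ (M : Theory.ModelType.{u, v, max u v} T) (a : I → α → M) (b : J → β → M),
      (∀ i ∈ U, ∀ j ∈ V, φ.Realize (Sum.elim (a i) (b j)) ↔ R i j) ∧ ∀ x ∈ s, x.Holds a b := by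
  classical
  obtain ⟨U', hU, hpU⟩ : ∃ U' : Finset I, U ⊆ U' ∧ ∀ x ∈ s, ∀ i, x.p i ∈ U' ∧ x.p' i ∈ U' :=
    ⟨U ∪ s.biUnion fun x => Finset.univ.image x.p ∪ Finset.univ.image x.p',
      Finset.subset_union_left, fun x hx i => by
        simp only [Finset.mem_union, Finset.mem_biUnion, Finset.mem_image]
        grind⟩
  obtain ⟨V', hV, hqV⟩ : ∃ V' : Finset J, V ⊆ V' ∧ ∀ x ∈ s, ∀ i, x.q i ∈ V' ∧ x.q' i ∈ V' :=
    ⟨V ∪ s.biUnion fun x => Finset.univ.image x.q ∪ Finset.univ.image x.q',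
      Finset.subset_union_left, fun x hx i => by
        simp only [Finset.mem_union, Finset.mem_biUnion, Finset.mem_image]
        grind⟩
  let u := U'.orderEmbOfFin rfl
  let v := V'.orderEmbOfFin rfl
  obtain ⟨M, a, b, hab, hinv⟩ := exists_edgeInvariant_fin h (fun i j => R (u i) (v j))
    (fun x : s => x.1.k) (fun x => x.1.m) fun x => x.1.formula
  obtain ⟨a, rfl⟩ : ∃ a' : I → α → M, a' ∘ u = a := u.injective.surjective_comp_right a
  obtain ⟨b, rfl⟩ : ∃ b' : J → β → M, b' ∘ v = b := v.injective.surjective_comp_right b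
  refine ⟨M, a, b, fun i hi j hj => ?_, fun x hx => ?_⟩
  · obtain ⟨i, rfl⟩ : i ∈ Set.range u := by simpa [u] using hU hi
    obtain ⟨j, rfl⟩ : j ∈ Set.range v := by simpa [v] using hV hj
    exact hab i j
  · obtain ⟨p, hp⟩ := exists_eq_orderEmbOfFin_comp fun i => (hpU x hx i).1
    obtain ⟨p', hp'⟩ := exists_eq_orderEmbOfFin_comp fun i => (hpU x hx i).2
    obtain ⟨q, hq⟩ := exists_eq_orderEmbOfFin_comp fun i => (hqV x hx i).1
    obtain ⟨q', hq'⟩ := exists_eq_orderEmbOfFin_comp fun i => (hqV x hx i).2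
    have hedge := x.edge_iff
    rw [EdgeInstance.Holds]
    simp only [hp, hp', hq, hq'] at hedge ⊢
    exact hinv ⟨x, hx⟩ p p' q q' hedge

theorem exists_isEdgeIndiscernible {T : L.Theory} {α β I J : Type} [LinearOrder I] [LinearOrder J]
    {φ : L.Formula (α ⊕ β)} (h : FormulaHasIP T φ) (R : I → J → Prop) :
    ∃ (M : Theory.ModelType.{u, v, max u v} T) (a : I → α → M) (b : J → β → M),
      IsEdgeIndiscernible (L := L) R a b ∧ ∀ i j, φ.Realize (Sum.elim (a i) (b j)) ↔ R i j := by
  classical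
  let Φ : (I × J) ⊕ EdgeInstance L R α β → L.Formula (I × α ⊕ J × β) :=
    Sum.elim (fun x => signedFormula (φ.relabel (Sum.map (Prod.mk x.1) (Prod.mk x.2))) (R x.1 x.2))
      EdgeInstance.toFormula
  obtain ⟨M, w, hw⟩ := exists_realize_of_finitely_realizable T Φ fun s => by
    obtain ⟨M, a, b, hab, hx⟩ := exists_edgeInvariant_finset h R (s.toLeft.image Prod.fst)
      (s.toLeft.image Prod.snd) s.toRight
    refine ⟨M, jointVal a b id id, ?_⟩
    rintro (⟨i, j⟩ | x) hs
    · replace hs := Finset.mem_toLeft.2 hs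
      exact realize_signedFormula_jointVal.2
        (hab i (Finset.mem_image_of_mem Prod.fst hs) j (Finset.mem_image_of_mem Prod.snd hs))
    · exact EdgeInstance.realize_toFormula.2 (hx x (Finset.mem_toRight.2 hs))
  obtain ⟨a, b, rfl⟩ := exists_eq_jointVal w
  exact ⟨M, a, b, fun k m p p' q q' hpq ψ =>
    EdgeInstance.realize_toFormula.1 (hw (.inr ⟨p, p', q, q', hpq, ψ⟩)),
    fun i j => realize_signedFormula_jointVal.1 (hw (.inl (i, j)))⟩

theorem not_formulaHasIP_of_isEmpty {T : L.Theory} {α β : Type*} [IsEmpty α]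
    (φ : L.Formula (α ⊕ β)) : ¬FormulaHasIP T φ := by
  rintro ⟨M, a, b, hab⟩
  have h0 := hab 0 {0}
  have h1 := hab 1 {0}
  rw [Subsingleton.elim (a 1) (a 0), h0] at h1
  simp at h1

namespace IsIndiscernibleOver

variable {M : Type (max u v)} [L.Structure M] {J : Type*} [LinearOrder J] {γ δ : Type} [Finite γ]
  {A : Set M} {b : J → δ → M} {r : ℕ} {c : Fin r → M}

theorem exists_forall_realize_iff (hb : IsIndiscernibleOver (L := L) b A) (hc : ∀ l, c l ∈ A)
    (θ : L.Formula (γ ⊕ (Fin r ⊕ δ))) {n : ℕ} (p q : Fin n ↪o J) (x : γ → M) :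
    ∃ x' : γ → M, ∀ t, θ.Realize (Sum.elim x' (Sum.elim c (b (q t)))) ↔
      θ.Realize (Sum.elim x (Sum.elim c (b (p t)))) := by
  let trace (t : Fin n) : Prop := θ.Realize (Sum.elim x (Sum.elim c (b (p t))))
  let vars (t : Fin n) : γ ⊕ (Fin r ⊕ δ) → (Fin n × δ ⊕ Fin r) ⊕ γ :=
    Sum.elim .inr (Sum.elim (.inl ∘ .inr) fun d => .inl (.inl (t, d)))
  let χ : L.Formula (Fin n × δ ⊕ Fin r) :=
    (Formula.iInf fun t => signedFormula (θ.relabel (vars t)) (trace t)).iExs γ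
  have hvars : ∀ (q : Fin n → J) (x' : γ → M) (t : Fin n),
      Sum.elim (Sum.elim (fun v => b (q v.1) v.2) c) x' ∘ vars t =
        Sum.elim x' (Sum.elim c (b (q t))) := fun q x' t => by
    ext (_ | _ | _) <;> rfl
  have hχ : ∀ q : Fin n → J, χ.Realize (Sum.elim (fun v => b (q v.1) v.2) c) ↔
      ∃ x' : γ → M, ∀ t, θ.Realize (Sum.elim x' (Sum.elim c (b (q t)))) ↔ trace t := fun q => by
    simp only [χ, Formula.realize_iExs, Formula.realize_iInf, realize_signedFormula,
      Formula.realize_relabel, hvars]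
  exact (hχ q).1 ((hb n r p q p.strictMono q.strictMono c hc χ).1 ((hχ p).2 ⟨x, fun _ => Iff.rfl⟩))

theorem formulaHasIP {T : L.Theory} [Nonempty M] [M ⊨ T]
    (hb : IsIndiscernibleOver (L := L) b A) (hc : ∀ l, c l ∈ A) {θ : L.Formula (γ ⊕ (Fin r ⊕ δ))}
    {x : γ → M} (hx : ∀ (n : ℕ) (E : Fin n → Prop), ∃ q : Fin n ↪o J,
      ∀ t, θ.Realize (Sum.elim x (Sum.elim c (b (q t)))) ↔ E t) : FormulaHasIP T θ := by
  refine formulaHasIP_iff_realizesPattern.2 (.of_forall_fin (fun k n E => ?_) _)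
  choose p hp using fun s => hx n (E s)
  obtain ⟨q, -⟩ := hx n fun _ => True
  choose y hy using fun s => hb.exists_forall_realize_iff hc θ (p s) q x
  exact ⟨Theory.ModelType.of T M, y, fun t => Sum.elim c (b (q t)),
    fun s t => (hy s t).trans (hp s t)⟩

end IsIndiscernibleOver

theorem isNIP_of_mutuallyIndiscernible {T : L.Theory} {da : ℕ} [NeZero da]
    (hT : ∀ (M : Type (max u v)) [L.Structure M] [Nonempty M], M ⊨ T →
      ∀ (db : ℕ) (a : ℚ → Fin da → M) (b : ℚ → Fin db → M) (R : ℚ → ℚ → Prop),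
        IsRandomOBG R → IsLStarIndiscernible (L := L) R a b →
          MutuallyIndiscernible (L := L) a b) : IsNIP T := by
  intro m
  induction m with
  | zero => exact fun n => not_formulaHasIP_of_isEmpty
  | succ m ih =>
    intro n φ hφ
    obtain ⟨R, hR⟩ := exists_isRandomOBG ℚ
    obtain ⟨M, a, b, hab, hφR⟩ := exists_isEdgeIndiscernible hφ R
    have hmut := hT M M.is_model n (fun i => a i ∘ fun _ => 0) b R hR
      (hab.comp_left _).isLStarIndiscernible
    let split : Fin (m + 1) ⊕ Fin n → Fin m ⊕ (Fin 1 ⊕ Fin n) :=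
      Sum.elim (Fin.cons (.inr (.inl 0)) .inl) (.inr ∘ .inr)
    let θ : L.Formula (Fin m ⊕ (Fin 1 ⊕ Fin n)) := φ.relabel split
    have hθ : ∀ j, θ.Realize (Sum.elim (Fin.tail (a 0)) (Sum.elim (fun _ => a 0 0) (b j))) ↔
        R 0 j := fun j => by
      have hvars : Sum.elim (Fin.tail (a 0)) (Sum.elim (fun _ => a 0 0) (b j)) ∘ split =
          Sum.elim (a 0) (b j) := by
        ext (i | i)
        · cases i using Fin.cases <;> rfl
        · rfl
      rw [Formula.realize_relabel, hvars, hφR]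
    have hθIP : FormulaHasIP T θ := by
      refine hmut.2.formulaHasIP (c := fun _ => a 0 0) (x := Fin.tail (a 0))
        (fun _ => Set.mem_iUnion.2 ⟨0, 0, rfl⟩) fun k E => ?_
      obtain ⟨q, hq⟩ := hR.exists_pattern_over (Function.Embedding.subtype (· = (0 : ℚ))) fun _ => E
      exact ⟨q, fun t => (hθ _).trans (hq ⟨0, rfl⟩ t)⟩
    exact ih _ _ ((formulaHasIP_iff_realizesPattern.1 hθIP).relabel (.refl _) finSumFinEquiv)

theorem nip_iff_LStar_indiscernible_mutually_indiscernible_singleton_general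
    (T : L.Theory) (da : ℕ) [NeZero da] :
    IsNIP T ↔
      ∀ (M : Type (max u v)) [L.Structure M] [Nonempty M], M ⊨ T →
        ∀ (db : ℕ) (a : ℚ → Fin da → M) (b : ℚ → Fin db → M) (R : ℚ → ℚ → Prop),
          IsRandomOBG R → IsLStarIndiscernible (L := L) R a b →
            MutuallyIndiscernible (L := L) a b := by
  refine ⟨fun hT M _ _ _ db a b R hR h => ?_, isNIP_of_mutuallyIndiscernible⟩
  exact (h.isEdgeIndiscernible.true_of_isNIP hR hT).mutuallyIndiscernible

end Indiscernibles

/-- A complete theory `T` is NIP iff every `L*`-indiscernible family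
`(aᵢ, b̄ᵢ : i ∈ ℚ)` in a model of `T` with the `aᵢ` single elements, indexed by the random
ordered bipartite graph `G*`, consists of two mutually indiscernible sequences. -/
theorem nip_iff_LStar_indiscernible_mutually_indiscernible_singleton
    {L : FirstOrder.Language.{u, v}} (T : L.Theory) (hT : T.IsComplete) :
    (∀ (m n : ℕ) (φ : L.Formula (Fin m ⊕ Fin n)), ¬ FormulaHasIP T φ) ↔
      (∀ (M : Type (max u v)) [L.Structure M] [Nonempty M], M ⊨ T →
        ∀ (db : ℕ) (a : ℚ → Fin 1 → M) (b : ℚ → Fin db → M) (R : ℚ → ℚ → Prop),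
          IsRandomOBG R → IsLStarIndiscernible (L := L) R a b →
            MutuallyIndiscernible (L := L) a b) :=
  nip_iff_LStar_indiscernible_mutually_indiscernible_singleton_general T 1
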